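/- For every integer k ≥ 1 and every nonnegative integer n, ped(9n + 7) ≡ ped(9·5^{2k}·n + (57·5^{2k} − 1)/8) (mod 24). (Here 57·5^{2k} − 1 is divisible by 8, so the second argument is a nonnegative integer.) -/

import Mathlib

/-- `ped n` is the number of partitions of `n` in which the even parts are
distinct (and the odd parts are unrestricted). -/
def ped (n : ℕ) : ℕ :=
  Fintype.card {p : n.Partition // ∀ x ∈ p.parts, Even x → p.parts.count x ≤ 1}

section PedGeneratingFunction

open Finset PowerSeries

section FiniteGauss

variable {R : Type*} [CommRing R]

theorem sum_range_prod_Ico_telescope (y w : R) (a : ℕ → R) (n : ℕ) :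
    ∑ s ∈ range (n + 1), (∏ r ∈ Ico s n, (1 - y ^ (r + 1))) * (∏ r ∈ range s, a r) * w ^ s *
      (w * a s - (1 - y ^ s)) = (∏ r ∈ range (n + 1), a r) * w ^ (n + 1) := by
  have key : ∀ m ≤ n, ∑ s ∈ range m, (∏ r ∈ Ico s n, (1 - y ^ (r + 1))) *
      (∏ r ∈ range s, a r) * w ^ s * (w * a s - (1 - y ^ s)) =
      (1 - y ^ m) * (∏ r ∈ Ico m n, (1 - y ^ (r + 1))) * (∏ r ∈ range m, a r) * w ^ m := by
    intro m
    induction m with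
    | zero => simp
    | succ m ih =>
      intro hm
      rw [sum_range_succ, ih (by omega), prod_eq_prod_Ico_succ_bot (by omega : m < n),
        prod_range_succ]
      ring
  rw [sum_range_succ, key n le_rfl, prod_range_succ]
  simp
  ring

/-- A finite form of Gauss's product formula for the sum of `x ^ (s * (s + 1) / 2)`. -/
theorem prod_mul_sum_pow_triangular (x : R) (n : ℕ) :
    (∏ r ∈ range n, (1 - x ^ (2 * r + 1))) * ∑ s ∈ range (2 * n + 1), x ^ (s * (s + 1) / 2) =
      ∑ s ∈ range (n + 1), (∏ r ∈ Ico s n, (1 - (x ^ 2) ^ (r + 1))) *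
        (∏ r ∈ range s, (1 - x ^ (2 * r + 1))) * x ^ (s * (2 * n + 1)) := by
  induction n with
  | zero => simp
  | succ n ih =>
    have h1 : (2 * n + 1) * (2 * n + 1 + 1) / 2 = (n + 1) * (2 * n + 1) :=
      Nat.div_eq_of_eq_mul_left two_pos (by ring)
    have h2 : (2 * n + 1 + 1) * (2 * n + 1 + 1 + 1) / 2 = (n + 1) * (2 * n + 3) :=
      Nat.div_eq_of_eq_mul_left two_pos (by ring)
    have tel := sum_range_prod_Ico_telescope (x ^ 2) (x ^ (2 * n + 1))
      (fun r ↦ 1 - x ^ (2 * r + 1)) n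
    have step : ∑ s ∈ range (n + 1), (∏ r ∈ Ico s (n + 1), (1 - (x ^ 2) ^ (r + 1))) *
        (∏ r ∈ range s, (1 - x ^ (2 * r + 1))) * x ^ (s * (2 * (n + 1) + 1)) =
        (1 - x ^ (2 * n + 1)) * (∑ s ∈ range (n + 1), (∏ r ∈ Ico s n, (1 - (x ^ 2) ^ (r + 1))) *
        (∏ r ∈ range s, (1 - x ^ (2 * r + 1))) * x ^ (s * (2 * n + 1))) +
        (∏ r ∈ range (n + 1), (1 - x ^ (2 * r + 1))) * (x ^ (2 * n + 1)) ^ (n + 1) := by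
      rw [← tel, mul_sum, ← sum_add_distrib]
      refine sum_congr rfl fun s hs ↦ ?_
      rw [prod_Ico_succ_top (by grind)]
      ring
    rw [show 2 * (n + 1) + 1 = 2 * n + 1 + 1 + 1 by ring, sum_range_succ _ (2 * n + 1 + 1),
      sum_range_succ _ (2 * n + 1), sum_range_succ _ (n + 1), h1, h2,
      show 2 * n + 1 + 1 + 1 = 2 * (n + 1) + 1 by ring, step, ← ih,
      Ico_self, prod_empty, prod_range_succ]
    ring

/-- A finite form of Gauss's product formula for the sum of `(-1) ^ s * x ^ (s ^ 2)`. -/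
theorem prod_mul_sum_neg_one_pow_mul_pow_sq (x : R) (n : ℕ) :
    (∏ r ∈ range n, (1 + x ^ (r + 1))) *
        (1 + 2 * ∑ s ∈ range n, (-1) ^ (s + 1) * x ^ ((s + 1) ^ 2)) =
      ∑ s ∈ range (n + 1), (∏ r ∈ Ico s n, (1 - x ^ (r + 1))) *
        (∏ r ∈ range s, (-(1 + x ^ r))) * x ^ (s * (n + 1)) := by
  induction n with
  | zero => simp
  | succ n ih =>
    have tel := sum_range_prod_Ico_telescope x (x ^ (n + 1)) (fun r ↦ -(1 + x ^ r)) n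
    have step : ∑ s ∈ range (n + 1), (∏ r ∈ Ico s (n + 1), (1 - x ^ (r + 1))) *
        (∏ r ∈ range s, (-(1 + x ^ r))) * x ^ (s * (n + 1 + 1)) =
        (1 + x ^ (n + 1)) * (∑ s ∈ range (n + 1), (∏ r ∈ Ico s n, (1 - x ^ (r + 1))) *
        (∏ r ∈ range s, (-(1 + x ^ r))) * x ^ (s * (n + 1))) +
        (∏ r ∈ range (n + 1), (-(1 + x ^ r))) * (x ^ (n + 1)) ^ (n + 1) := by
      rw [← tel, mul_sum, ← sum_add_distrib]
      refine sum_congr rfl fun s hs ↦ ?_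
      rw [prod_Ico_succ_top (by grind)]
      ring
    have sgn : ∏ r ∈ range (n + 1), (-(1 + x ^ r)) =
        (-1) ^ (n + 1) * (2 * ∏ r ∈ range n, (1 + x ^ (r + 1))) := by
      rw [prod_neg, card_range, prod_range_succ']
      simp only [pow_zero]
      ring
    rw [sum_range_succ, sum_range_succ _ (n + 1), step, ← ih, sgn, Ico_self, prod_empty,
      prod_range_succ]
    ring

end FiniteGauss

/-- The generating function of `ped`. -/
noncomputable def pedSeries : ℤ⟦X⟧ := PowerSeries.mk fun n ↦ (ped n : ℤ)

/-- The factor of the generating function of `ped` that accounts for the part `i + 1`. -/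
noncomputable def pedFactor (i : ℕ) : ℤ⟦X⟧ :=
  if Even (i + 1) then 1 + X ^ (i + 1) else mk fun n ↦ if i + 1 ∣ n then 1 else 0

theorem pedFactor_of_odd {i : ℕ} (hi : ¬ Even (i + 1)) :
    pedFactor i * (1 - X ^ (i + 1)) = 1 := by
  rw [pedFactor, if_neg hi]
  ext n
  rw [mul_sub, mul_one, map_sub, coeff_mul_X_pow', coeff_mk, coeff_mk, coeff_one]
  rcases Nat.eq_zero_or_pos n with rfl | hn
  · simp
  · rw [if_neg hn.ne']
    by_cases h : i + 1 ≤ n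
    · have : i + 1 ∣ n - (i + 1) ↔ i + 1 ∣ n := by
        rw [← Nat.dvd_add_left (dvd_refl (i + 1)), Nat.sub_add_cancel h]
      simp [h, this]
    · have : ¬ i + 1 ∣ n := fun h' ↦ h (Nat.le_of_dvd hn h')
      simp [h, this]

open scoped PowerSeries.WithPiTopology in
theorem hasProd_pedFactor : HasProd pedFactor pedSeries := by
  convert! Nat.Partition.hasProd_genFun
    (fun i c ↦ if Even i → c ≤ 1 then (1 : ℤ) else 0) using 1
  · ext1 i
    unfold pedFactor
    split_ifs with h
    · rw [tsum_eq_single 0 (by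
        intro b hb
        rw [if_neg (by simp [h, hb])]
        exact zero_smul ℤ _)]
      rw [if_pos (by simp), zero_add, mul_one]
      exact congrArg _ (one_smul ℤ _).symm
    · rw [← sub_eq_iff_eq_add', eq_comm]
      suffices key : HasSum (fun j : ℕ ↦ (X : ℤ⟦X⟧) ^ ((i + 1) * (j + 1)))
          ((mk fun n ↦ if i + 1 ∣ n then 1 else 0) - 1) by
        refine (tsum_congr fun j ↦ ?_).trans key.tsum_eq
        rw [if_pos (by simp [h])]
        exact one_smul ℤ _
      rw [WithPiTopology.hasSum_iff_hasSum_coeff]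
      intro d
      simp only [map_sub, coeff_mk, coeff_one, coeff_X_pow]
      by_cases hd : i + 1 ∣ d ∧ d ≠ 0
      · obtain ⟨⟨k, rfl⟩, hk⟩ := hd
        obtain ⟨k, rfl⟩ := Nat.exists_eq_succ_of_ne_zero (right_ne_zero_of_mul hk)
        simpa [eq_comm] using hasSum_ite_eq k (1 : ℤ)
      · have h0 (j : ℕ) : d ≠ (i + 1) * (j + 1) := by
          rintro rfl
          exact hd ⟨dvd_mul_right _ _, by positivity⟩
        have h1 : ((if i + 1 ∣ d then 1 else 0) - if d = 0 then 1 else 0 : ℤ) = 0 := by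
          by_cases hd0 : d = 0
          · simp [hd0]
          · simp [hd0, show ¬ i + 1 ∣ d from fun h' ↦ hd ⟨h', hd0⟩]
        simp [h0, h1, hasSum_zero]
  · ext n
    rw [pedSeries, coeff_mk, Nat.Partition.coeff_genFun, ped, Fintype.card_subtype, card_filter]
    simp_rw [Finsupp.prod, prod_boole]
    push_cast
    simp

open scoped PowerSeries.WithPiTopology in
theorem exists_X_pow_dvd_pedSeries_sub (N : ℕ) :
    ∃ n, N ≤ n ∧ X ^ N ∣ pedSeries - ∏ i ∈ range (2 * n), pedFactor i := by
  have h := (PowerSeries.WithPiTopology.tendsto_iff_coeff_tendsto _ _ _ _).1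
    hasProd_pedFactor.tendsto_prod_nat
  simp_rw [nhds_discrete, Filter.tendsto_pure] at h
  have h2 := (Filter.eventually_all_finset (range N)).2 fun d _ ↦ h d
  obtain ⟨M, hM⟩ := Filter.eventually_atTop.1 h2
  refine ⟨max M N, le_max_right _ _, X_pow_dvd_iff.2 fun m hm ↦ ?_⟩
  rw [map_sub, hM (2 * max M N) (by omega) m (by simpa using hm), sub_self]

theorem prod_range_pedFactor_mul (n : ℕ) :
    (∏ i ∈ range (2 * n), pedFactor i) * ∏ r ∈ range n, (1 - X ^ (2 * r + 1)) =
      ∏ r ∈ range n, (1 + (X ^ 2) ^ (r + 1)) := by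
  induction n with
  | zero => simp
  | succ n ih =>
    have h1 : pedFactor (2 * n) * (1 - X ^ (2 * n + 1)) = 1 :=
      pedFactor_of_odd (by grind)
    have h2 : pedFactor (2 * n + 1) = 1 + (X ^ 2) ^ (n + 1) := by
      rw [pedFactor, if_pos (by grind), ← pow_mul]; rfl
    rw [show 2 * (n + 1) = 2 * n + 1 + 1 by ring, prod_range_succ _ (2 * n + 1),
      prod_range_succ _ (2 * n), prod_range_succ _ n, prod_range_succ _ n, ← ih, h2]
    linear_combination (∏ i ∈ range (2 * n), pedFactor i) *
      (∏ r ∈ range n, (1 - X ^ (2 * r + 1))) * (1 + (X ^ 2) ^ (n + 1)) * h1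

/-- The generating series `∑ i, X ^ f i`, for `f` with finite fibers. -/
noncomputable def countSeries {ι : Type*} (f : ι → ℕ) : ℤ⟦X⟧ :=
  PowerSeries.mk fun n ↦ ((f ⁻¹' {n}).ncard : ℤ)

theorem coeff_countSeries {ι : Type*} (f : ι → ℕ) (n : ℕ) :
    coeff n (countSeries f) = ((f ⁻¹' {n}).ncard : ℤ) := coeff_mk _ _

theorem X_pow_dvd_countSeries_sub {ι : Type*} (f : ι → ℕ) (N : ℕ) (S : Finset ι)
    (h : ∀ i, f i < N → i ∈ S) : X ^ N ∣ countSeries f - ∑ i ∈ S, X ^ f i := by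
  refine X_pow_dvd_iff.2 fun m hm ↦ ?_
  have hS : f ⁻¹' {m} = ((S.filter fun i ↦ m = f i : Finset ι) : Set ι) := by
    ext i
    simp only [Set.mem_preimage, Set.mem_singleton_iff, coe_filter, Set.mem_ofPred_eq]
    exact ⟨fun hi ↦ ⟨h i (hi ▸ hm), hi.symm⟩, fun hi ↦ hi.2.symm⟩
  rw [map_sub, coeff_countSeries, map_sum, hS, Set.ncard_coe_finset, card_filter]
  simp [coeff_X_pow]

/-- Ramanujan's theta function `φ(q) = ∑ z : ℤ, q ^ (z ^ 2)`. -/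
noncomputable def thetaPhi : ℤ⟦X⟧ := countSeries fun z : ℤ ↦ z.natAbs ^ 2

/-- Ramanujan's theta function `ψ(q) = ∑ j : ℕ, q ^ (j * (j + 1) / 2)`. -/
noncomputable def thetaPsi : ℤ⟦X⟧ := countSeries fun j : ℕ ↦ j * (j + 1) / 2

theorem X_pow_dvd_thetaPhi_sub (n : ℕ) :
    X ^ n ∣ thetaPhi - (1 + 2 * ∑ s ∈ range n, X ^ ((s + 1) ^ 2)) := by
  have h := X_pow_dvd_countSeries_sub (fun z : ℤ ↦ z.natAbs ^ 2) n (Icc (-n : ℤ) n) fun z hz ↦ by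
    have : z.natAbs < n := lt_of_le_of_lt (Nat.le_self_pow two_ne_zero _) hz
    rw [mem_Icc]
    omega
  convert! h using 1
  rw [sum_Icc_of_even_eq_range (f := fun z : ℤ ↦ (X : ℤ⟦X⟧) ^ z.natAbs ^ 2) (fun z ↦ by simp),
    sum_range_succ']
  have h1 (s : ℕ) : ((s : ℤ) + 1).natAbs = s + 1 := by omega
  simp [thetaPhi, h1]
  ring

theorem X_pow_dvd_thetaPsi_sub (n : ℕ) :
    X ^ n ∣ thetaPsi - ∑ s ∈ range (n + 1), X ^ (s * (s + 1) / 2) := by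
  refine X_pow_dvd_countSeries_sub (fun j : ℕ ↦ j * (j + 1) / 2) n (range (n + 1)) fun j hj ↦ ?_
  rcases Nat.eq_zero_or_pos j with rfl | hj0
  · simp
  · have : j ≤ j * (j + 1) / 2 := (Nat.le_div_iff_mul_le two_pos).2 (by nlinarith)
    simp only [mem_range]
    omega

theorem prod_range_two_mul (f : ℕ → ℤ⟦X⟧) (n : ℕ) :
    ∏ r ∈ range (2 * n), f r = (∏ r ∈ range n, f (2 * r)) * ∏ r ∈ range n, f (2 * r + 1) := by
  induction n with
  | zero => simp
  | succ n ih =>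
    rw [show 2 * (n + 1) = 2 * n + 1 + 1 by ring, prod_range_succ, prod_range_succ, ih,
      prod_range_succ, prod_range_succ]
    ring

theorem pow_dvd_sum_range_succ_sub {N n : ℕ} (f : ℕ → ℤ⟦X⟧) (e : ℕ → ℕ)
    (he : ∀ s, N ≤ e (s + 1)) :
    X ^ N ∣ ∑ s ∈ range (n + 1), f s * X ^ e s - f 0 * X ^ e 0 := by
  rw [sum_range_succ', add_sub_cancel_right]
  exact dvd_sum fun s _ ↦ Dvd.dvd.mul_left (pow_dvd_pow _ (he s)) _

theorem pow_dvd_evalNegHom {N : ℕ} {f : ℤ⟦X⟧} (h : X ^ N ∣ f) : X ^ N ∣ evalNegHom f := by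
  have := map_dvd evalNegHom h
  rwa [map_pow, evalNegHom_X, neg_pow, IsUnit.mul_left_dvd (isUnit_one.neg.pow N)] at this

theorem pedSeries_mul_evalNegHom_thetaPhi :
    pedSeries * evalNegHom thetaPhi = evalNegHom thetaPsi := by
  suffices h : ∀ N, X ^ N ∣ pedSeries * evalNegHom thetaPhi - evalNegHom thetaPsi by
    rw [← sub_eq_zero]
    ext d
    exact X_pow_dvd_iff.1 (h (d + 1)) d (by omega)
  intro N
  obtain ⟨n, hn, hP⟩ := exists_X_pow_dvd_pedSeries_sub N
  have hphi := (pow_dvd_pow X (by omega : N ≤ 2 * n)).trans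
    (pow_dvd_evalNegHom (X_pow_dvd_thetaPhi_sub (2 * n)))
  have hpsi := (pow_dvd_pow X (by omega : N ≤ 2 * n)).trans
    (pow_dvd_evalNegHom (X_pow_dvd_thetaPsi_sub (2 * n)))
  have hsq (s : ℕ) : (-1 : ℤ⟦X⟧) ^ ((s + 1) ^ 2) = (-1) ^ (s + 1) := by
    rcases Nat.even_or_odd (s + 1) with h | h
    · rw [h.neg_one_pow, (h.pow_of_ne_zero two_ne_zero).neg_one_pow]
    · rw [h.neg_one_pow, h.pow.neg_one_pow]
  simp only [map_sub, map_add, map_mul, map_sum, map_pow, map_one, map_ofNat,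
    evalNegHom_X] at hphi hpsi
  have e1 := prod_mul_sum_neg_one_pow_mul_pow_sq (X : ℤ⟦X⟧) (2 * n)
  have e2 := prod_mul_sum_pow_triangular (-X : ℤ⟦X⟧) n
  have d1 := pow_dvd_sum_range_succ_sub (N := N) (n := 2 * n) (fun s ↦
    (∏ r ∈ Ico s (2 * n), (1 - X ^ (r + 1))) * (∏ r ∈ range s, (-(1 + X ^ r))))
    (fun s ↦ s * (2 * n + 1)) (by intro s; nlinarith)
  have d2 := pow_dvd_sum_range_succ_sub (N := N) (n := n) (fun s ↦
    (∏ r ∈ Ico s n, (1 - (X ^ 2) ^ (r + 1))) * (∏ r ∈ range s, (1 - (-X) ^ (2 * r + 1))) *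
    (-1) ^ (s * (2 * n + 1))) (fun s ↦ s * (2 * n + 1)) (by intro s; nlinarith)
  simp only [neg_sq, neg_pow X (_ * _), ← mul_assoc] at e2
  simp only [neg_pow X (_ ^ 2), hsq] at hphi
  simp only [← e1] at d1
  simp only [← e2] at d2
  have hq := prod_range_pedFactor_mul n
  have hD := prod_range_two_mul (fun r ↦ 1 - (X : ℤ⟦X⟧) ^ (r + 1)) n
  have hN := prod_range_two_mul (fun r ↦ 1 + (X : ℤ⟦X⟧) ^ (r + 1)) n
  simp only [zero_mul, pow_zero, mul_one, prod_range_zero, ← range_eq_Ico] at d1 d2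
  have hO (r : ℕ) : 1 - (-X : ℤ⟦X⟧) ^ (2 * r + 1) = 1 + X ^ (2 * r + 1) := by
    rw [Odd.neg_pow ⟨r, rfl⟩, sub_neg_eq_add]
  have hE (r : ℕ) : (X : ℤ⟦X⟧) ^ (2 * r + 1 + 1) = (X ^ 2) ^ (r + 1) := by ring
  simp only [hO] at d2
  simp only [hE] at hD hN
  have hu : IsUnit (∏ r ∈ range (2 * n), (1 + (X : ℤ⟦X⟧) ^ (r + 1))) := by
    rw [isUnit_iff_constantCoeff]
    simp
  rw [← hu.dvd_mul_left]
  obtain ⟨p, hp⟩ := hP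
  obtain ⟨f, hf⟩ := hphi
  obtain ⟨g, hg⟩ := hpsi
  obtain ⟨u, hu'⟩ := d1
  obtain ⟨v, hv⟩ := d2
  rw [sub_eq_iff_eq_add] at hp hf hg
  rw [hp, hf, hg]
  generalize (∑ x ∈ range (2 * n + 1), (-X : ℤ⟦X⟧) ^ (x * (x + 1) / 2)) = T at *
  generalize (1 + 2 * ∑ x ∈ range (2 * n), (-1 : ℤ⟦X⟧) ^ (x + 1) * X ^ (x + 1) ^ 2) = S at *
  generalize (∏ r ∈ range (2 * n), (1 + (X : ℤ⟦X⟧) ^ (r + 1))) = A at *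
  generalize (∏ r ∈ range (2 * n), (1 - (X : ℤ⟦X⟧) ^ (r + 1))) = D at *
  generalize (∏ i ∈ range (2 * n), pedFactor i) = B at *
  generalize (∏ r ∈ range n, (1 + ((X : ℤ⟦X⟧) ^ 2) ^ (r + 1))) = E' at *
  generalize (∏ r ∈ range n, (1 - ((X : ℤ⟦X⟧) ^ 2) ^ (r + 1))) = E at *
  refine ⟨A * (p * S + f * B + p * f * X ^ N - g) + B * u - E' * v, ?_⟩
  linear_combination B * hu' - T * hN - E' * hv + B * hD + E * hq

theorem countSeries_comp_equiv {ι κ : Type*} (e : ι ≃ κ) (f : κ → ℕ) :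
    countSeries (f ∘ e) = countSeries f := by
  ext n
  rw [coeff_countSeries, coeff_countSeries, Set.preimage_comp,
    Set.ncard_preimage_of_injective_subset_range e.injective (by simp)]

theorem countSeries_sumElim {ι κ : Type*} {f : ι → ℕ} {g : κ → ℕ}
    (hf : ∀ n, (f ⁻¹' {n}).Finite) (hg : ∀ n, (g ⁻¹' {n}).Finite) :
    countSeries (Sum.elim f g) = countSeries f + countSeries g := by
  ext n
  rw [map_add, coeff_countSeries, coeff_countSeries, coeff_countSeries]
  have : Sum.elim f g ⁻¹' {n} = Sum.inl '' (f ⁻¹' {n}) ∪ Sum.inr '' (g ⁻¹' {n}) := by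
    ext x
    rcases x with x | x <;> simp
  rw [this, Set.ncard_union_eq (by simp [Set.disjoint_left]) ((hf n).image _) ((hg n).image _),
    Set.ncard_image_of_injective _ Sum.inl_injective,
    Set.ncard_image_of_injective _ Sum.inr_injective]
  push_cast
  rfl

theorem countSeries_mul {ι κ : Type*} {f : ι → ℕ} {g : κ → ℕ}
    (hf : ∀ n, (f ⁻¹' {n}).Finite) (hg : ∀ n, (g ⁻¹' {n}).Finite) :
    countSeries f * countSeries g = countSeries fun p : ι × κ ↦ f p.1 + g p.2 := by
  classical
  ext n
  have : (fun p : ι × κ ↦ f p.1 + g p.2) ⁻¹' {n} = (((antidiagonal n).biUnion fun p ↦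
      (hf p.1).toFinset ×ˢ (hg p.2).toFinset : Finset (ι × κ)) : Set (ι × κ)) := by
    ext x
    simp
  rw [coeff_mul, coeff_countSeries, this, Set.ncard_coe_finset, card_biUnion]
  · push_cast
    refine sum_congr rfl fun p _ ↦ ?_
    rw [coeff_countSeries, coeff_countSeries, card_product, Set.ncard_eq_toFinset_card _ (hf _),
      Set.ncard_eq_toFinset_card _ (hg _)]
    push_cast
    rfl
  · intro p _ q _ hpq
    simp only [Finset.disjoint_left, mem_product, Set.Finite.mem_toFinset, Set.mem_preimage,
      Set.mem_singleton_iff]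
    rintro x ⟨h1, h2⟩ ⟨h3, h4⟩
    exact hpq (Prod.ext (h1.symm.trans h3) (h2.symm.trans h4))

theorem expand_countSeries {ι : Type*} {k : ℕ} (hk : k ≠ 0) (f : ι → ℕ) :
    expand k hk (countSeries f) = countSeries fun i ↦ k * f i := by
  ext n
  by_cases h : k ∣ n
  · obtain ⟨m, rfl⟩ := h
    rw [mul_comm, mul_comm m, coeff_expand_mul, coeff_countSeries, coeff_countSeries]
    congr 2
    ext i
    simp [hk]
  · rw [coeff_expand_of_not_dvd _ _ _ h, coeff_countSeries, eq_comm, Nat.cast_eq_zero]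
    convert! Set.ncard_empty ι
    ext i
    simp only [Set.mem_preimage, Set.mem_singleton_iff, Set.mem_empty_iff_false, iff_false]
    rintro rfl
    exact h (dvd_mul_right _ _)

/-- The triangular number `z * (z + 1) / 2`, indexed by an integer. -/
def intTriangle (z : ℤ) : ℕ := (z * (z + 1) / 2).toNat

theorem two_mul_intTriangle (z : ℤ) : 2 * (intTriangle z : ℤ) = z * (z + 1) := by
  have h0 : 0 ≤ z * (z + 1) := by
    rcases le_or_gt 0 z with h | h <;> nlinarith
  rw [intTriangle, Int.toNat_of_nonneg (by omega),
    Int.mul_ediv_cancel' (Int.even_mul_succ_self z).two_dvd]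

theorem two_mul_triangle (j : ℕ) : 2 * (j * (j + 1) / 2) = j * (j + 1) :=
  Nat.mul_div_cancel' (Nat.even_mul_succ_self j).two_dvd

theorem finite_preimage_triangle (n : ℕ) : ((fun j : ℕ ↦ j * (j + 1) / 2) ⁻¹' {n}).Finite := by
  refine (Set.finite_Iic n).subset fun j hj ↦ ?_
  have h := two_mul_triangle j
  simp only [Set.mem_preimage, Set.mem_singleton_iff, Set.mem_Iic] at *
  rw [hj] at h
  nlinarith

theorem finite_preimage_intTriangle (n : ℕ) : (intTriangle ⁻¹' {n}).Finite := by
  refine (Set.finite_Icc (-n - 1 : ℤ) (n + 1)).subset fun j hj ↦ ?_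
  have h := two_mul_intTriangle j
  simp only [Set.mem_preimage, Set.mem_singleton_iff, Set.mem_Icc] at *
  rw [hj] at h
  constructor <;> nlinarith

theorem finite_preimage_natAbs_sq (n : ℕ) : ((fun z : ℤ ↦ z.natAbs ^ 2) ⁻¹' {n}).Finite := by
  refine (Set.finite_Icc (-n : ℤ) n).subset fun z hz ↦ ?_
  have : z.natAbs ≤ z.natAbs ^ 2 := Nat.le_self_pow two_ne_zero _
  simp only [Set.mem_preimage, Set.mem_singleton_iff, Set.mem_Icc] at *
  omega

theorem two_mul_thetaPsi : 2 * thetaPsi = countSeries intTriangle := by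
  rw [← countSeries_comp_equiv Equiv.intEquivNatSumNat.symm, two_mul, thetaPsi,
    ← countSeries_sumElim finite_preimage_triangle finite_preimage_triangle]
  congr 1
  funext x
  have h1 (j : ℕ) : j * (j + 1) / 2 = intTriangle j := by
    apply Nat.eq_of_mul_eq_mul_left two_pos
    rw [two_mul_triangle]
    zify
    rw [two_mul_intTriangle]
  have h2 (j : ℕ) : j * (j + 1) / 2 = intTriangle (Int.negSucc j) := by
    apply Nat.eq_of_mul_eq_mul_left two_pos
    rw [two_mul_triangle]
    zify
    rw [two_mul_intTriangle, Int.negSucc_eq]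
    ring
  rcases x with j | j
  · exact h1 j
  · exact h2 j

theorem finite_preimage_const_mul {ι : Type*} {f : ι → ℕ} (hf : ∀ n, (f ⁻¹' {n}).Finite) {k : ℕ}
    (hk : k ≠ 0) (n : ℕ) : ((fun i ↦ k * f i) ⁻¹' {n}).Finite := by
  refine (hf (n / k)).subset fun i hi ↦ ?_
  simp only [Set.mem_preimage, Set.mem_singleton_iff] at *
  rw [← hi, Nat.mul_div_cancel_left _ (Nat.pos_of_ne_zero hk)]

theorem finite_preimage_add {ι κ : Type*} {f : ι → ℕ} {g : κ → ℕ}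
    (hf : ∀ n, (f ⁻¹' {n}).Finite) (hg : ∀ n, (g ⁻¹' {n}).Finite) (n : ℕ) :
    ((fun p : ι × κ ↦ f p.1 + g p.2) ⁻¹' {n}).Finite := by
  refine ((antidiagonal n).finite_toSet.biUnion fun p _ ↦ (hf p.1).prod (hg p.2)).subset
    fun x hx ↦ ?_
  simpa using hx

theorem thetaPhi_mul_expand_thetaPsi :
    thetaPhi * expand 2 two_ne_zero thetaPsi = thetaPsi ^ 2 := by
  have h : 2 * (thetaPhi * (expand 2 two_ne_zero (2 * thetaPsi))) =
      (2 * thetaPsi) * (2 * thetaPsi) := by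
    rw [two_mul_thetaPsi, expand_countSeries, thetaPhi,
      countSeries_mul finite_preimage_natAbs_sq
        (finite_preimage_const_mul finite_preimage_intTriangle two_ne_zero),
      countSeries_mul finite_preimage_intTriangle finite_preimage_intTriangle, two_mul,
      ← countSeries_sumElim]
    · let e : (ℤ × ℤ) ⊕ (ℤ × ℤ) → ℤ × ℤ :=
        Sum.elim (fun p ↦ (p.2 + p.1, p.2 - p.1)) (fun p ↦ (p.2 + p.1, -1 - (p.2 - p.1)))
      have he : e.Bijective := by
        constructor
        · rintro (⟨a, b⟩ | ⟨a, b⟩) (⟨c, d⟩ | ⟨c, d⟩) h <;>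
          simp only [e, Sum.elim_inl, Sum.elim_inr, Prod.mk.injEq, Sum.inl.injEq, Sum.inr.injEq,
            reduceCtorEq] at h ⊢ <;> omega
        · rintro ⟨a, b⟩
          rcases Int.even_or_odd' (a - b) with ⟨c, h | h⟩
          · refine ⟨Sum.inl (c, b + c), ?_⟩
            simp only [e, Sum.elim_inl, Prod.mk.injEq]
            omega
          · refine ⟨Sum.inr (b + c + 1, c), ?_⟩
            simp only [e, Sum.elim_inr, Prod.mk.injEq]
            omega
      rw [← countSeries_comp_equiv (Equiv.ofBijective e he)]
      congr 1
      funext x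
      rcases x with ⟨a, b⟩ | ⟨a, b⟩
      · simp only [Sum.elim_inl, Function.comp_apply, Equiv.ofBijective_apply, e]
        zify
        rw [sq_abs]
        linarith [two_mul_intTriangle b, two_mul_intTriangle (b + a), two_mul_intTriangle (b - a)]
      · simp only [Sum.elim_inr, Function.comp_apply, Equiv.ofBijective_apply, e]
        zify
        rw [sq_abs]
        linarith [two_mul_intTriangle b, two_mul_intTriangle (b + a),
          two_mul_intTriangle (-1 - (b - a))]
    all_goals
      exact finite_preimage_add finite_preimage_natAbs_sq
        (finite_preimage_const_mul finite_preimage_intTriangle two_ne_zero)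
  rw [map_mul, map_ofNat] at h
  have h4 : (4 : ℤ⟦X⟧) ≠ 0 := fun h ↦ by
    have := congrArg constantCoeff h
    rw [map_ofNat constantCoeff 4, map_zero] at this
    norm_num at this
  refine mul_left_cancel₀ h4 ?_
  linear_combination h

/-- The representations of `M` by the form `x ^ 2 + 2 * y ^ 2`. -/
def reps (M : ℤ) : Set (ℤ × ℤ) := {p | p.1 ^ 2 + 2 * p.2 ^ 2 = M}

theorem finite_reps (M : ℤ) : (reps M).Finite := by
  refine ((Set.finite_Icc (-M) M).prod (Set.finite_Icc (-M) M)).subset ?_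
  rintro ⟨x, y⟩ h
  change x ^ 2 + 2 * y ^ 2 = M at h
  simp only [Set.mem_prod, Set.mem_Icc]
  have h1 := Int.le_self_sq x
  have h2 := Int.le_self_sq y
  have h3 := Int.le_self_sq (-x)
  have h4 := Int.le_self_sq (-y)
  have h5 := sq_nonneg x
  have h6 := sq_nonneg y
  rw [neg_sq] at h3 h4
  refine ⟨⟨?_, ?_⟩, ?_, ?_⟩ <;> linarith

theorem coeff_countSeries_eq_ncard {ι κ : Type*} {f : ι → ℕ} {n : ℕ} {S : Set κ} (e : ι → κ)
    (he : e.Injective) (h : ∀ i, f i = n ↔ e i ∈ S) (hS : S ⊆ Set.range e) :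
    coeff n (countSeries f) = (S.ncard : ℤ) := by
  rw [coeff_countSeries, ← Set.ncard_preimage_of_injective_subset_range he hS]
  congr 2
  ext i
  exact h i

theorem two_mul_coeff_thetaPsi_mul_thetaPhi (m : ℕ) :
    2 * coeff m (thetaPsi * thetaPhi) = ((reps (8 * m + 1)).ncard : ℤ) := by
  have : 2 * coeff m (thetaPsi * thetaPhi) = coeff m ((2 * thetaPsi) * thetaPhi) := by
    rw [two_mul, two_mul, add_mul, map_add]
  rw [this, two_mul_thetaPsi, thetaPhi,
    countSeries_mul finite_preimage_intTriangle finite_preimage_natAbs_sq]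
  refine coeff_countSeries_eq_ncard (fun p ↦ (2 * p.1 + 1, 2 * p.2)) ?_ ?_ ?_
  · rintro ⟨a, b⟩ ⟨c, d⟩ h
    simp only [Prod.mk.injEq] at h ⊢
    omega
  · rintro ⟨a, b⟩
    have := two_mul_intTriangle a
    zify
    rw [sq_abs]
    simp only [reps, Set.mem_ofPred_eq]
    constructor <;> intro h <;> linarith
  · rintro ⟨x, y⟩ h
    change x ^ 2 + 2 * y ^ 2 = 8 * m + 1 at h
    rcases Int.even_or_odd' x with ⟨a, rfl | rfl⟩
    · ring_nf at h; omega
    · rcases Int.even_or_odd' y with ⟨b, rfl | rfl⟩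
      · exact ⟨(a, b), rfl⟩
      · have := two_mul_intTriangle a
        have h' : 8 * (intTriangle a : ℤ) + 8 * (b ^ 2 + b) + 2 = 8 * m := by linarith
        omega

theorem four_mul_coeff_thetaPsi_mul_expand_thetaPsi (m : ℕ) :
    4 * coeff m (thetaPsi * expand 2 two_ne_zero thetaPsi) = ((reps (8 * m + 3)).ncard : ℤ) := by
  have : 4 * coeff m (thetaPsi * expand 2 two_ne_zero thetaPsi) =
      coeff m ((2 * thetaPsi) * expand 2 two_ne_zero (2 * thetaPsi)) := by
    rw [two_mul thetaPsi, map_add, mul_add, add_mul, map_add, map_add]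
    ring
  rw [this, two_mul_thetaPsi, expand_countSeries, countSeries_mul finite_preimage_intTriangle
    (finite_preimage_const_mul finite_preimage_intTriangle two_ne_zero)]
  refine coeff_countSeries_eq_ncard (fun p ↦ (2 * p.1 + 1, 2 * p.2 + 1)) ?_ ?_ ?_
  · rintro ⟨a, b⟩ ⟨c, d⟩ h
    simp only [Prod.mk.injEq] at h ⊢
    omega
  · rintro ⟨a, b⟩
    have := two_mul_intTriangle a
    have := two_mul_intTriangle b
    zify
    simp only [reps, Set.mem_ofPred_eq]
    constructor <;> intro h <;> linarith
  · rintro ⟨x, y⟩ h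
    change x ^ 2 + 2 * y ^ 2 = 8 * m + 3 at h
    rcases Int.even_or_odd' x with ⟨a, rfl | rfl⟩
    · ring_nf at h; omega
    · rcases Int.even_or_odd' y with ⟨b, rfl | rfl⟩
      · have := two_mul_intTriangle a
        have h' : 8 * (intTriangle a : ℤ) + 8 * b ^ 2  = 8 * m + 2 := by linarith
        omega
      · exact ⟨(a, b), rfl⟩

theorem two_mul_coeff_expand_thetaPsi_mul_expand_thetaPhi (n : ℕ) :
    2 * coeff n (expand 3 three_ne_zero thetaPsi * expand 3 three_ne_zero thetaPhi) =
      ((reps (24 * n + 9) ∩ {p | 3 ∣ p.1 ∧ 3 ∣ p.2}).ncard : ℤ) := by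
  have : 2 * coeff n (expand 3 three_ne_zero thetaPsi * expand 3 three_ne_zero thetaPhi) =
      coeff n (expand 3 three_ne_zero (2 * thetaPsi) * expand 3 three_ne_zero thetaPhi) := by
    rw [two_mul, two_mul, map_add, add_mul, map_add]
  rw [this, two_mul_thetaPsi, thetaPhi, expand_countSeries, expand_countSeries, countSeries_mul
    (finite_preimage_const_mul finite_preimage_intTriangle three_ne_zero)
    (finite_preimage_const_mul finite_preimage_natAbs_sq three_ne_zero)]
  refine coeff_countSeries_eq_ncard (fun p ↦ (3 * (2 * p.1 + 1), 6 * p.2)) ?_ ?_ ?_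
  · rintro ⟨a, b⟩ ⟨c, d⟩ h
    simp only [Prod.mk.injEq] at h ⊢
    omega
  · rintro ⟨a, b⟩
    have := two_mul_intTriangle a
    zify
    rw [sq_abs]
    have h1 : (3 : ℤ) ∣ 3 * (2 * a + 1) := dvd_mul_right _ _
    have h2 : (3 : ℤ) ∣ 6 * b := Dvd.dvd.mul_right (by norm_num) _
    simp only [reps, Set.mem_inter_iff, Set.mem_ofPred_eq, h1, h2, and_true]
    constructor <;> intro h <;> linarith
  · rintro ⟨x, y⟩ ⟨h, ⟨x, rfl⟩, ⟨y, rfl⟩⟩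
    change (3 * x) ^ 2 + 2 * (3 * y) ^ 2 = 24 * n + 9 at h
    rcases Int.even_or_odd' x with ⟨a, rfl | rfl⟩
    · ring_nf at h; omega
    · rcases Int.even_or_odd' y with ⟨b, rfl | rfl⟩
      · exact ⟨(a, b), by simp; ring⟩
      · have := two_mul_intTriangle a
        ring_nf at h this
        omega

theorem ncard_reps_inter (M : ℤ) :
    (reps (3 * M) ∩ {p | 3 ∣ p.1 - p.2}).ncard = (reps M).ncard := by
  let e : ℤ × ℤ → ℤ × ℤ := fun p ↦ (p.1 - 2 * p.2, p.1 + p.2)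
  have he : e.Injective := by
    rintro ⟨a, b⟩ ⟨c, d⟩ h
    simp only [e, Prod.mk.injEq] at h ⊢
    omega
  rw [← Set.ncard_preimage_of_injective_subset_range he]
  · congr 1
    ext ⟨u, v⟩
    have h1 : (3 : ℤ) ∣ u - 2 * v - (u + v) := ⟨-v, by ring⟩
    simp only [reps, e, Set.mem_preimage, Set.mem_inter_iff, Set.mem_ofPred_eq, h1, and_true]
    constructor <;> intro h <;> linarith
  · rintro ⟨x, y⟩ ⟨-, v, hv⟩
    exact ⟨(y + v, -v), by simp only [e, Prod.mk.injEq]; dsimp at hv; omega⟩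

theorem ncard_reps_inter' (M : ℤ) :
    (reps (3 * M) ∩ {p | 3 ∣ p.1 + p.2}).ncard = (reps M).ncard := by
  rw [← ncard_reps_inter, ← Set.ncard_preimage_of_injective_subset_range
    (f := fun p : ℤ × ℤ ↦ (p.1, -p.2))]
  · congr 1
    ext ⟨u, v⟩
    simp [reps, sub_eq_add_neg]
  · rintro ⟨a, b⟩ ⟨c, d⟩ h
    simpa using h
  · rintro ⟨x, y⟩ -
    exact ⟨(x, -y), by simp⟩

theorem ncard_reps_three_mul (M : ℤ) :
    (reps (3 * M)).ncard + (reps (3 * M) ∩ {p | 3 ∣ p.1 ∧ 3 ∣ p.2}).ncard =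
      2 * (reps M).ncard := by
  have h := Set.ncard_union_add_ncard_inter _ _
    ((finite_reps (3 * M)).inter_of_left {p | 3 ∣ p.1 - p.2})
    ((finite_reps (3 * M)).inter_of_left {p | 3 ∣ p.1 + p.2})
  rw [ncard_reps_inter, ncard_reps_inter', ← two_mul] at h
  rw [← h]
  congr 2
  · ext ⟨x, y⟩
    simp only [reps, Set.mem_union, Set.mem_inter_iff, Set.mem_ofPred_eq, ← and_or_left]
    refine ⟨fun h ↦ ⟨h, ?_⟩, And.left⟩
    refine Int.prime_three.dvd_or_dvd ⟨M - y ^ 2, ?_⟩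
    linarith
  · ext ⟨x, y⟩
    simp only [reps, Set.mem_inter_iff, Set.mem_ofPred_eq]
    constructor
    · rintro ⟨h, h1, h2⟩
      exact ⟨⟨h, by omega⟩, h, by omega⟩
    · rintro ⟨⟨h, h1⟩, -, h2⟩
      exact ⟨h, by omega, by omega⟩

theorem ncard_reps_twentyFive_mul (M : ℤ) : (reps (25 * M)).ncard = (reps M).ncard := by
  let e : ℤ × ℤ → ℤ × ℤ := fun p ↦ (5 * p.1, 5 * p.2)
  have he : e.Injective := by
    rintro ⟨a, b⟩ ⟨c, d⟩ h
    simp only [e, Prod.mk.injEq] at h ⊢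
    omega
  rw [← Set.ncard_preimage_of_injective_subset_range he]
  · congr 1
    ext ⟨u, v⟩
    simp only [reps, e, Set.mem_preimage, Set.mem_ofPred_eq]
    constructor <;> intro h <;> linarith
  · rintro ⟨x, y⟩ h
    have h' : x ^ 2 + 2 * y ^ 2 = 25 * M := h
    have key : ∀ a b : ZMod 5, a ^ 2 + 2 * b ^ 2 = 0 → a = 0 ∧ b = 0 := by decide
    have h5 := congrArg (Int.cast : ℤ → ZMod 5) h'
    push_cast at h5
    rw [show (25 : ZMod 5) = 0 from rfl, zero_mul] at h5
    obtain ⟨hx, hy⟩ := key _ _ h5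
    obtain ⟨a, rfl⟩ := (ZMod.intCast_zmod_eq_zero_iff_dvd x 5).1 hx
    obtain ⟨b, rfl⟩ := (ZMod.intCast_zmod_eq_zero_iff_dvd y 5).1 hy
    exact ⟨(a, b), rfl⟩

theorem coeff_thetaPsi_mul_expand_thetaPsi_twentyFive (m : ℕ) :
    coeff (25 * m + 9) (thetaPsi * expand 2 two_ne_zero thetaPsi) =
      coeff m (thetaPsi * expand 2 two_ne_zero thetaPsi) := by
  have h1 := four_mul_coeff_thetaPsi_mul_expand_thetaPsi m
  have h2 := four_mul_coeff_thetaPsi_mul_expand_thetaPsi (25 * m + 9)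
  rw [show (8 * ((25 * m + 9 : ℕ) : ℤ) + 3) = 25 * (8 * m + 3) by push_cast; ring,
    ncard_reps_twentyFive_mul] at h2
  omega

/-- The series `∑ n, c (3 * n + 1) * X ^ n` extracted from `∑ n, c n * X ^ n`. -/
noncomputable def residueOne : ℤ⟦X⟧ →+ ℤ⟦X⟧ where
  toFun f := PowerSeries.mk fun n ↦ coeff (3 * n + 1) f
  map_zero' := by ext n; simp
  map_add' f g := by ext n; simp

theorem coeff_residueOne (f : ℤ⟦X⟧) (n : ℕ) :
    coeff n (residueOne f) = coeff (3 * n + 1) f := by simp [residueOne]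

theorem residueOne_natCast_mul (c : ℕ) (f : ℤ⟦X⟧) :
    residueOne (c * f) = c * residueOne f := by
  rw [← nsmul_eq_mul, map_nsmul, nsmul_eq_mul]

theorem residueOne_expand_mul (f g : ℤ⟦X⟧) :
    residueOne (expand 3 three_ne_zero f * g) = f * residueOne g := by
  ext n
  rw [coeff_residueOne, coeff_mul, coeff_mul]
  symm
  refine sum_of_injOn (fun p ↦ (3 * p.1, 3 * p.2 + 1)) ?_ ?_ ?_ ?_
  · rintro ⟨a, b⟩ _ ⟨c, d⟩ _ h
    simp only [Prod.mk.injEq] at h ⊢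
    omega
  · rintro ⟨a, b⟩ h
    simp only [mem_coe, HasAntidiagonal.mem_antidiagonal] at h ⊢
    omega
  · rintro ⟨a, b⟩ h h'
    rw [coeff_expand_of_not_dvd, zero_mul]
    rintro ⟨c, rfl⟩
    rw [HasAntidiagonal.mem_antidiagonal] at h
    refine h' ⟨(c, n - c), ?_, ?_⟩
    · simp only [mem_coe, HasAntidiagonal.mem_antidiagonal]
      omega
    · simp only [Prod.mk.injEq, true_and]
      omega
  · rintro ⟨a, b⟩ -
    rw [coeff_expand_mul, coeff_residueOne]

theorem residueOne_thetaPsi : residueOne thetaPsi = expand 3 three_ne_zero thetaPsi := by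
  ext n
  rw [coeff_residueOne, thetaPsi, expand_countSeries, coeff_countSeries]
  symm
  refine coeff_countSeries_eq_ncard (fun j ↦ 3 * j + 1) ?_ ?_ ?_
  · intro a b h
    simpa using h
  · intro j
    have h1 := two_mul_triangle j
    have h2 := two_mul_triangle (3 * j + 1)
    simp only [Set.mem_preimage, Set.mem_singleton_iff]
    ring_nf at *
    omega
  · intro j hj
    simp only [Set.mem_preimage, Set.mem_singleton_iff] at hj
    have h1 := two_mul_triangle j
    rw [hj] at h1
    obtain ⟨k, rfl | rfl | rfl⟩ : ∃ k, j = 3 * k ∨ j = 3 * k + 1 ∨ j = 3 * k + 2 :=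
      ⟨j / 3, by omega⟩
    · ring_nf at h1; omega
    · exact ⟨k, rfl⟩
    · ring_nf at h1; omega

theorem coeff_thetaPsi_three_mul_add_two (n : ℕ) : coeff (3 * n + 2) thetaPsi = 0 := by
  rw [thetaPsi, coeff_countSeries, Nat.cast_eq_zero]
  convert! Set.ncard_empty ℕ
  refine Set.eq_empty_of_forall_notMem fun j hj ↦ ?_
  simp only [Set.mem_preimage, Set.mem_singleton_iff] at hj
  have h1 := two_mul_triangle j
  rw [hj] at h1
  obtain ⟨k, rfl | rfl | rfl⟩ : ∃ k, j = 3 * k ∨ j = 3 * k + 1 ∨ j = 3 * k + 2 :=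
    ⟨j / 3, by omega⟩ <;> ring_nf at h1 <;> omega

theorem coeff_thetaPhi_three_mul_add_two (n : ℕ) : coeff (3 * n + 2) thetaPhi = 0 := by
  rw [thetaPhi, coeff_countSeries, Nat.cast_eq_zero]
  convert! Set.ncard_empty ℤ
  refine Set.eq_empty_of_forall_notMem fun z hz ↦ ?_
  simp only [Set.mem_preimage, Set.mem_singleton_iff] at hz
  obtain ⟨k, h | h | h⟩ : ∃ k, z.natAbs = 3 * k ∨ z.natAbs = 3 * k + 1 ∨ z.natAbs = 3 * k + 2 :=
    ⟨z.natAbs / 3, by omega⟩ <;> rw [h] at hz <;> ring_nf at hz <;> omega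

theorem coeff_thetaPhi_three_mul (n : ℕ) :
    coeff (3 * n) thetaPhi = coeff n (expand 3 three_ne_zero thetaPhi) := by
  rw [thetaPhi, expand_countSeries, coeff_countSeries]
  symm
  refine coeff_countSeries_eq_ncard (fun z ↦ 3 * z) ?_ ?_ ?_
  · intro a b h
    simpa using h
  · intro z
    simp only [Set.mem_preimage, Set.mem_singleton_iff, Int.natAbs_mul, Int.reduceAbs, mul_pow]
    omega
  · intro z hz
    simp only [Set.mem_preimage, Set.mem_singleton_iff] at hz
    have : 3 ∣ z.natAbs := Nat.prime_three.dvd_of_dvd_pow (hz ▸ dvd_mul_right 3 n)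
    obtain ⟨w, rfl⟩ := Int.natCast_dvd.2 this
    exact ⟨w, rfl⟩

theorem coeff_thetaPhi_sub_eq_zero {n : ℕ} (hn : n % 3 ≠ 1) :
    coeff n (thetaPhi - expand 3 three_ne_zero (expand 3 three_ne_zero thetaPhi)) = 0 := by
  rw [map_sub]
  obtain ⟨k, rfl | rfl⟩ : ∃ k, n = 3 * k ∨ n = 3 * k + 2 := ⟨n / 3, by omega⟩
  · rw [coeff_expand_mul, coeff_thetaPhi_three_mul, sub_self]
  · rw [coeff_thetaPhi_three_mul_add_two, coeff_expand_of_not_dvd _ _ _ (by omega), sub_self]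

theorem residueOne_thetaPsi_mul_sub_sq :
    residueOne (thetaPsi *
      (thetaPhi - expand 3 three_ne_zero (expand 3 three_ne_zero thetaPhi)) ^ 2) = 0 := by
  ext n
  rw [coeff_residueOne, map_zero, coeff_mul]
  refine sum_eq_zero fun p hp ↦ ?_
  rw [HasAntidiagonal.mem_antidiagonal] at hp
  by_cases h2 : p.2 % 3 = 2
  · obtain ⟨k, hk⟩ : ∃ k, p.1 = 3 * k + 2 := ⟨p.1 / 3, by omega⟩
    rw [hk, coeff_thetaPsi_three_mul_add_two, zero_mul]
  · rw [sq, coeff_mul, sum_eq_zero, mul_zero]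
    intro q hq
    rw [HasAntidiagonal.mem_antidiagonal] at hq
    by_cases h1 : q.1 % 3 = 1
    · rw [coeff_thetaPhi_sub_eq_zero (n := q.2) (by omega), mul_zero]
    · rw [coeff_thetaPhi_sub_eq_zero h1, zero_mul]

theorem residueOne_thetaPsi_mul_thetaPhi :
    residueOne (thetaPsi * thetaPhi) = 4 * (thetaPsi * expand 2 two_ne_zero thetaPsi) -
      expand 3 three_ne_zero thetaPsi * expand 3 three_ne_zero thetaPhi := by
  ext n
  have h1 := two_mul_coeff_thetaPsi_mul_thetaPhi (3 * n + 1)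
  have h2 := four_mul_coeff_thetaPsi_mul_expand_thetaPsi n
  have h3 := two_mul_coeff_expand_thetaPsi_mul_expand_thetaPhi n
  have h4 := ncard_reps_three_mul (8 * n + 3)
  rw [show (8 * ((3 * n + 1 : ℕ) : ℤ) + 1) = 3 * (8 * n + 3) by push_cast; ring] at h1
  rw [show (24 * (n : ℤ) + 9) = 3 * (8 * n + 3) by ring] at h3
  have h5 : coeff n (4 * (thetaPsi * expand 2 two_ne_zero thetaPsi)) =
      4 * coeff n (thetaPsi * expand 2 two_ne_zero thetaPsi) := by
    rw [← map_ofNat (C (R := ℤ)) 4, coeff_C_mul]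
  rw [coeff_residueOne, map_sub, h5]
  omega

theorem residueOne_thetaPsi_mul_thetaPhi_sq :
    residueOne (thetaPsi * thetaPhi ^ 2) =
      8 * expand 3 three_ne_zero thetaPhi * (thetaPsi * expand 2 two_ne_zero thetaPsi) -
      3 * expand 3 three_ne_zero thetaPhi ^ 2 * expand 3 three_ne_zero thetaPsi := by
  set a := expand 3 three_ne_zero thetaPhi with ha
  have h : thetaPsi * thetaPhi ^ 2 = thetaPsi * (thetaPhi - expand 3 three_ne_zero a) ^ 2 +
      (expand 3 three_ne_zero a * (thetaPsi * thetaPhi) +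
        expand 3 three_ne_zero a * (thetaPsi * thetaPhi)) -
      expand 3 three_ne_zero a * (expand 3 three_ne_zero a * thetaPsi) := by ring
  rw [h, map_sub, map_add, map_add, residueOne_thetaPsi_mul_sub_sq, residueOne_expand_mul,
    residueOne_expand_mul, residueOne_expand_mul, residueOne_thetaPsi_mul_thetaPhi,
    residueOne_thetaPsi]
  ring

theorem coeff_natCast_mul (c : ℕ) (n : ℕ) (f : ℤ⟦X⟧) :
    coeff n ((c : ℤ⟦X⟧) * f) = c * coeff n f := by
  rw [← nsmul_eq_mul, map_nsmul, nsmul_eq_mul]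

theorem exists_thetaPhi_eq : ∃ S, thetaPhi = 1 + 2 * S := by
  refine ⟨PowerSeries.mk fun n ↦ coeff n (∑ s ∈ range (n + 1), X ^ ((s + 1) ^ 2)), ?_⟩
  ext n
  have h := X_pow_dvd_iff.1 (X_pow_dvd_thetaPhi_sub (n + 1)) n n.lt_succ_self
  rw [map_sub, sub_eq_zero] at h
  rw [h, map_add, map_add]
  congr 1
  have (f : ℤ⟦X⟧) : coeff n (2 * f) = 2 * coeff n f := coeff_natCast_mul 2 n f
  rw [this, this, coeff_mk]

theorem exists_cube_eq (f : ℤ⟦X⟧) : ∃ W, f ^ 3 = expand 3 three_ne_zero f + 3 * W := by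
  have h : PowerSeries.map (Int.castRingHom (ZMod 3)) (f ^ 3 - expand 3 three_ne_zero f) = 0 := by
    have h3 := MvPowerSeries.map_frobenius_expand (p := 3) three_ne_zero
      (f := PowerSeries.map (Int.castRingHom (ZMod 3)) f)
    rw [map_sub, map_pow, map_expand, ← h3, ZMod.frobenius_zmod, sub_eq_zero]
    exact congrArg (fun g : _ →+* _ ↦ g (expand 3 three_ne_zero
      (PowerSeries.map (Int.castRingHom (ZMod 3)) f))) MvPowerSeries.map_id
  refine ⟨PowerSeries.mk fun n ↦ coeff n (f ^ 3 - expand 3 three_ne_zero f) / 3, ?_⟩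
  rw [← sub_eq_iff_eq_add']
  ext n
  have h' := congrArg (coeff n) h
  rw [coeff_map, map_zero, eq_intCast, ZMod.intCast_zmod_eq_zero_iff_dvd] at h'
  have h4 (g : ℤ⟦X⟧) : coeff n (3 * g) = 3 * coeff n g := coeff_natCast_mul 3 n g
  rw [h4, coeff_mk]
  exact (Int.mul_ediv_cancel' h').symm

theorem evalNegHom_pedSeries_mul_thetaPhi : evalNegHom pedSeries * thetaPhi = thetaPsi := by
  have h (f : ℤ⟦X⟧) : evalNegHom (evalNegHom f) = f := by
    ext n
    simp [evalNegHom, rescale_rescale]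
  have := congrArg evalNegHom pedSeries_mul_evalNegHom_thetaPhi
  rwa [map_mul, h, h] at this

theorem coeff_evalNegHom_pedSeries (n : ℕ) :
    coeff n (evalNegHom pedSeries) = (-1) ^ n * (ped n : ℤ) := by
  simp [evalNegHom, coeff_rescale, pedSeries]

theorem coeff_mul_expand_three_eq_zero {f g : ℤ⟦X⟧} (hf : ∀ n, coeff (3 * n + 2) f = 0) (n : ℕ) :
    coeff (3 * n + 2) (f * expand 3 three_ne_zero g) = 0 := by
  rw [coeff_mul, sum_eq_zero]
  intro p hp
  rw [HasAntidiagonal.mem_antidiagonal] at hp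
  by_cases h : 3 ∣ p.2
  · obtain ⟨k, hk⟩ : ∃ k, p.1 = 3 * k + 2 := ⟨p.1 / 3, by omega⟩
    rw [hk, hf, zero_mul]
  · rw [coeff_expand_of_not_dvd _ _ _ h, mul_zero]

theorem eight_dvd_neg_one_pow_mul_ped_sub (n : ℕ) :
    (8 : ℤ) ∣ (-1) ^ (9 * n + 7) * (ped (9 * n + 7) : ℤ) -
      4 * coeff (3 * n + 2) (thetaPsi * expand 2 two_ne_zero thetaPsi) := by
  obtain ⟨S, hS⟩ := exists_thetaPhi_eq
  have h1 : evalNegHom pedSeries + (8 : ℕ) * (evalNegHom pedSeries * S ^ 3) +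
      (3 : ℕ) * (thetaPsi * thetaPhi) =
      thetaPsi * thetaPhi ^ 2 + (3 : ℕ) * thetaPsi := by
    rw [← evalNegHom_pedSeries_mul_thetaPhi, hS]
    push_cast
    ring
  have h2 := congrArg residueOne h1
  rw [map_add, map_add, map_add, residueOne_natCast_mul, residueOne_natCast_mul,
    residueOne_natCast_mul, residueOne_thetaPsi_mul_thetaPhi_sq, residueOne_thetaPsi_mul_thetaPhi,
    residueOne_thetaPsi] at h2
  have hz (f : ℤ⟦X⟧) : coeff (3 * n + 2) (expand 3 three_ne_zero f) = 0 :=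
    coeff_expand_of_not_dvd _ _ _ (by omega)
  set t := thetaPsi * expand 2 two_ne_zero thetaPsi
  set a := expand 3 three_ne_zero thetaPhi with ha
  have h3 : residueOne (evalNegHom pedSeries) =
      ((4 : ℕ) : ℤ⟦X⟧) * t +
      ((8 : ℕ) : ℤ⟦X⟧) * (a * t - 2 * t - residueOne (evalNegHom pedSeries * S ^ 3)) +
      expand 3 three_ne_zero (3 * (thetaPsi * thetaPhi) + 3 * thetaPsi -
        3 * thetaPhi ^ 2 * thetaPsi) := by
    simp only [map_sub, map_add, map_mul, map_pow, map_ofNat, ← ha]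
    clear_value t
    push_cast at *
    linear_combination h2
  have h4 := congrArg (coeff (3 * n + 2)) h3
  rw [coeff_residueOne, map_add, map_add, hz, coeff_natCast_mul, coeff_natCast_mul,
    coeff_evalNegHom_pedSeries, show 3 * (3 * n + 2) + 1 = 9 * n + 7 by ring] at h4
  rw [h4]
  push_cast
  omega

theorem three_dvd_ped (n : ℕ) : 3 ∣ ped (9 * n + 7) := by
  obtain ⟨W, hW⟩ := exists_cube_eq thetaPhi
  obtain ⟨V, hV⟩ := exists_cube_eq thetaPsi
  set p := evalNegHom pedSeries with hp
  have h1 : expand 3 three_ne_zero thetaPhi * p + (3 : ℕ) * (W * p) = thetaPsi * thetaPhi ^ 2 := by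
    rw [← evalNegHom_pedSeries_mul_thetaPhi, ← hp]
    push_cast
    linear_combination -p * hW
  have h2 := congrArg residueOne h1
  rw [map_add, residueOne_natCast_mul, residueOne_expand_mul,
    residueOne_thetaPsi_mul_thetaPhi_sq] at h2
  have hu : IsUnit thetaPhi := by
    have h := X_pow_dvd_iff.1 (X_pow_dvd_thetaPhi_sub 1) 0 one_pos
    rw [map_sub, sub_eq_zero] at h
    rw [isUnit_iff_constantCoeff, ← coeff_zero_eq_constantCoeff_apply, h]
    simp
  obtain ⟨Y, hY⟩ := hu.exists_left_inv
  obtain ⟨Q, hQ⟩ : ∃ Q, thetaPhi * residueOne p =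
      -(thetaPhi ^ 2 * expand 3 three_ne_zero thetaPsi) + ((3 : ℕ) : ℤ⟦X⟧) * Q := by
    refine ⟨-(thetaPhi ^ 2 * V) +
      3 * thetaPhi ^ 3 * (thetaPsi * expand 2 two_ne_zero thetaPsi) -
      8 * W * (thetaPsi * expand 2 two_ne_zero thetaPsi) -
      expand 3 three_ne_zero thetaPhi ^ 2 * expand 3 three_ne_zero thetaPsi -
      residueOne (W * p), ?_⟩
    push_cast at *
    linear_combination h2 - 8 * thetaPsi * expand 2 two_ne_zero thetaPsi * hW -
      thetaPhi ^ 2 * hV - thetaPhi ^ 2 * thetaPsi * thetaPhi_mul_expand_thetaPsi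
  have h5 : residueOne p =
      -(thetaPhi * expand 3 three_ne_zero thetaPsi) + ((3 : ℕ) : ℤ⟦X⟧) * (Y * Q) := by
    linear_combination Y * hQ -
      (residueOne p + thetaPhi * expand 3 three_ne_zero thetaPsi) * hY
  have h6 := congrArg (coeff (3 * n + 2)) h5
  rw [coeff_residueOne, map_add, map_neg, coeff_natCast_mul, coeff_evalNegHom_pedSeries,
    coeff_mul_expand_three_eq_zero coeff_thetaPhi_three_mul_add_two,
    show 3 * (3 * n + 2) + 1 = 9 * n + 7 by ring] at h6
  rw [neg_zero, zero_add] at h6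
  rw [← Int.natCast_dvd_natCast, ← (isUnit_one.neg.pow (9 * n + 7)).dvd_mul_left, h6]
  exact dvd_mul_right _ _

theorem ped_modEq_twentyFive (n : ℕ) : ped (9 * n + 7) ≡ ped (9 * (25 * n + 19) + 7) [MOD 24] := by
  have h3 := three_dvd_ped n
  have h3' := three_dvd_ped (25 * n + 19)
  have h8 := eight_dvd_neg_one_pow_mul_ped_sub n
  have h8' := eight_dvd_neg_one_pow_mul_ped_sub (25 * n + 19)
  rw [show 3 * (25 * n + 19) + 2 = 25 * (3 * n + 2) + 9 by ring,
    coeff_thetaPsi_mul_expand_thetaPsi_twentyFive] at h8'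
  have hpm (a : ℕ) (b : ℤ) : (-1) ^ a * b = b ∨ (-1) ^ a * b = -b := by
    rcases neg_one_pow_eq_or ℤ a with h | h <;> simp [h]
  have e1 := hpm (9 * n + 7) (ped (9 * n + 7))
  have e2 := hpm (9 * (25 * n + 19) + 7) (ped (9 * (25 * n + 19) + 7))
  rw [Nat.modEq_iff_dvd]
  omega

theorem ped_modEq_of_eq_pow_mul (k n m : ℕ) (hm : 24 * m + 19 = 25 ^ k * (24 * n + 19)) :
    ped (9 * n + 7) ≡ ped (9 * m + 7) [MOD 24] := by
  induction k generalizing n with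
  | zero =>
    rw [show m = n by omega]
  | succ k ih =>
    refine (ped_modEq_twentyFive n).trans (ih (25 * n + 19) ?_)
    rw [hm]
    ring

end PedGeneratingFunction

theorem ped_iterated_congruence (k n : ℕ) (hk : 1 ≤ k) :
    ped (9 * n + 7) ≡ ped (9 * 5 ^ (2 * k) * n + (57 * 5 ^ (2 * k) - 1) / 8) [MOD 24] := by
  obtain ⟨c, hc⟩ : 24 ∣ 25 ^ k - 1 := by simpa using Nat.sub_dvd_pow_sub_pow 25 1 k
  have hq : 25 ^ k = 24 * c + 1 := by
    have := Nat.one_le_pow k 25 (by norm_num)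
    omega
  have h := ped_modEq_of_eq_pow_mul k n ((24 * c + 1) * n + 19 * c) (by rw [hq]; ring)
  have h8 : (57 * (24 * c + 1) - 1) / 8 = 9 * (19 * c) + 7 := by omega
  rw [pow_mul, show 5 ^ 2 = 25 from rfl, hq, h8]
  convert! h using 2
  ring
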